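/- For any classification theory T, any D ⊆ F(T) and any classifier κ on T: (1) D ⊆ Irr(D,κ); (2) Irr(D,κ) is an envelope under (D,κ), i.e. Irr(D,κ) ∈ Coh(D,κ); and (3) Irr(D,κ) equals the intersection of all subset-maximal envelopes in Coh(D,κ). -/

import Mathlib

/-- A classification theory: a finite set of features, a finite domain (with at
least two values) for each feature, and a finite set of at least two classes. -/
structure CTheory where
  F : Finset ℕ
  dom : ℕ → Finset ℕ
  dom_nontrivial : ∀ f ∈ F, 1 < (dom f).card
  C : Finset ℕ
  C_nontrivial : 2 ≤ C.card

/-- A literal of a theory is a pair (feature, value) with the value in the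
feature's domain. -/
def IsLiteral (T : CTheory) (l : ℕ × ℕ) : Prop :=
  l.1 ∈ T.F ∧ l.2 ∈ T.dom l.1

/-- A set of literals is consistent iff no feature gets two distinct values. -/
def ConsistentLits (S : Set (ℕ × ℕ)) : Prop :=
  ∀ l ∈ S, ∀ l' ∈ S, l.1 = l'.1 → l.2 = l'.2

/-- A partial assignment: a consistent set of literals (each feature occurs at
most once). -/
def IsPartialAssignment (T : CTheory) (E : Set (ℕ × ℕ)) : Prop :=
  (∀ l ∈ E, IsLiteral T l) ∧ ConsistentLits E

/-- An instance: a partial assignment in which every feature occurs (exactly) once. -/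
def IsInstance (T : CTheory) (x : Set (ℕ × ℕ)) : Prop :=
  IsPartialAssignment T x ∧ ∀ f ∈ T.F, ∃ v, (f, v) ∈ x

/-- The feature space of a theory: the set of all its instances. -/
def FeatureSpace (T : CTheory) : Set (Set (ℕ × ℕ)) := {x | IsInstance T x}

/-- A classifier maps every instance to a class. -/
def IsClassifier (T : CTheory) (κ : Set (ℕ × ℕ) → ℕ) : Prop :=
  ∀ x ∈ FeatureSpace T, κ x ∈ T.C

/-- A question (T, κ, D, x): κ is a classifier on T, D ⊆ F(T) and x ∈ D. -/
def IsQuestion (T : CTheory) (κ : Set (ℕ × ℕ) → ℕ)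
    (D : Set (Set (ℕ × ℕ))) (x : Set (ℕ × ℕ)) : Prop :=
  IsClassifier T κ ∧ D ⊆ FeatureSpace T ∧ x ∈ D

/-- An explainer maps every question (T, κ, D, x) to a set of sets of literals. -/
abbrev Explainer :=
  CTheory → (Set (ℕ × ℕ) → ℕ) → Set (Set (ℕ × ℕ)) → Set (ℕ × ℕ) → Set (Set (ℕ × ℕ))

/-- An explainer returns, on every question over T, a subset of E(T)
(the partial assignments of T). -/
def IsExplainer (L : Explainer) : Prop :=
  ∀ T κ D x, IsQuestion T κ D x → ∀ E ∈ L T κ D x, IsPartialAssignment T E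

/-- Feasibility: every explanation is part of the instance being explained. -/
def Feasibility (L : Explainer) : Prop :=
  ∀ T κ D x, IsQuestion T κ D x → ∀ E ∈ L T κ D x, E ⊆ x

/-- Validity: no explanation is contradicted within the dataset. -/
def Validity (L : Explainer) : Prop :=
  ∀ T κ D x, IsQuestion T κ D x → ∀ E ∈ L T κ D x,
    ¬ ∃ y ∈ D, E ⊆ y ∧ κ y ≠ κ x

/-- Success: every question receives at least one explanation. -/
def Success (L : Explainer) : Prop :=
  ∀ T κ D x, IsQuestion T κ D x → (L T κ D x).Nonempty

/-- Coherence: explanations of instances with distinct classes are jointly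
inconsistent. -/
def Coherence (L : Explainer) : Prop :=
  ∀ T κ D x x', IsQuestion T κ D x → IsQuestion T κ D x' → κ x ≠ κ x' →
    ∀ E ∈ L T κ D x, ∀ E' ∈ L T κ D x', ¬ ConsistentLits (E ∪ E')

/-- Irreducibility: no literal of an explanation can be removed
(witnessed in the dataset). -/
def Irreducibility (L : Explainer) : Prop :=
  ∀ T κ D x, IsQuestion T κ D x → ∀ E ∈ L T κ D x, ∀ l ∈ E,
    ∃ x' ∈ D, κ x' ≠ κ x ∧ E \ {l} ⊆ x'

/-- Strong Irreducibility: no literal of an explanation can be removed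
(witnessed in the feature space). -/
def StrongIrreducibility (L : Explainer) : Prop :=
  ∀ T κ D x, IsQuestion T κ D x → ∀ E ∈ L T κ D x, ∀ l ∈ E,
    ∃ x' ∈ FeatureSpace T, κ x' ≠ κ x ∧ E \ {l} ⊆ x'

/-- Completeness: every omitted candidate is invalidated within the dataset. -/
def Completeness (L : Explainer) : Prop :=
  ∀ T κ D x, IsQuestion T κ D x → ∀ E ⊆ x, E ∉ L T κ D x →
    ∃ y ∈ D, E ⊆ y ∧ κ y ≠ κ x

/-- Strong Completeness: every omitted candidate is invalidated within the
feature space. -/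
def StrongCompleteness (L : Explainer) : Prop :=
  ∀ T κ D x, IsQuestion T κ D x → ∀ E ⊆ x, E ∉ L T κ D x →
    ∃ y ∈ FeatureSpace T, E ⊆ y ∧ κ y ≠ κ x

/-- Monotonicity: enlarging the dataset preserves explanations. -/
def Monotonicity (L : Explainer) : Prop :=
  ∀ T κ D D' x, IsQuestion T κ D x → IsQuestion T κ D' x → D ⊆ D' →
    L T κ D x ⊆ L T κ D' x

/-- Counter-Monotonicity: enlarging the dataset can only discard explanations. -/
def CounterMonotonicity (L : Explainer) : Prop :=
  ∀ T κ D D' x, IsQuestion T κ D x → IsQuestion T κ D' x → D ⊆ D' →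
    L T κ D' x ⊆ L T κ D x

/-- The explainer L_dw returning all weak abductive explanations (dwAXp's):
E ⊆ x and every y ∈ D containing E has the same class as x. -/
def Ldw : Explainer := fun _T κ D x =>
  {E | E ⊆ x ∧ ∀ y ∈ D, E ⊆ y → κ y = κ x}

/-- The explainer L_w returning the weak abductive explanations computed on the
whole feature space. -/
def Lw : Explainer := fun T κ _D x => Ldw T κ (FeatureSpace T) x

/-- The explainer L_dc returning the subset-minimal weak abductive explanations
(concise abductive explanations). -/
def Ldc : Explainer := fun T κ D x =>
  {E | E ∈ Ldw T κ D x ∧ ∀ E' ∈ Ldw T κ D x, E' ⊆ E → E' = E}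

/-- A set X of partial assignments is coherent under (D, κ): no two of its
members are consistent together while being contained in instances of D with
distinct classes. -/
def CoherentSet (κ : Set (ℕ × ℕ) → ℕ) (D : Set (Set (ℕ × ℕ)))
    (X : Set (Set (ℕ × ℕ))) : Prop :=
  ¬ ∃ E ∈ X, ∃ E' ∈ X, ConsistentLits (E ∪ E') ∧
      ∃ y ∈ D, ∃ z ∈ D, E ⊆ y ∧ E' ⊆ z ∧ κ y ≠ κ z

/-- An envelope under (D, κ): a coherent set of dwAXp's covering every instance
of D. -/
def IsEnvelope (T : CTheory) (κ : Set (ℕ × ℕ) → ℕ) (D : Set (Set (ℕ × ℕ)))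
    (X : Set (Set (ℕ × ℕ))) : Prop :=
  (∀ E ∈ X, IsPartialAssignment T E) ∧
  CoherentSet κ D X ∧
  (∀ E ∈ X, ∃ x ∈ D, E ∈ Ldw T κ D x) ∧
  (∀ x ∈ D, ∃ E ∈ X, E ⊆ x)

/-- W: the union of all dwAXp's of all instances of the dataset. -/
def dwUnion (T : CTheory) (κ : Set (ℕ × ℕ) → ℕ) (D : Set (Set (ℕ × ℕ))) :
    Set (Set (ℕ × ℕ)) :=
  {E | ∃ x ∈ D, E ∈ Ldw T κ D x}

/-- The two defining conditions of an irrefutable envelope (before maximality):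
a set of dwAXp's none of which conflicts with any dwAXp. -/
def IrrCandidate (T : CTheory) (κ : Set (ℕ × ℕ) → ℕ) (D : Set (Set (ℕ × ℕ)))
    (X : Set (Set (ℕ × ℕ))) : Prop :=
  X ⊆ dwUnion T κ D ∧
  ∀ E ∈ X, ¬ ∃ E' ∈ dwUnion T κ D, ¬ CoherentSet κ D {E, E'}

/-- An irrefutable envelope under (D, κ): a subset-maximal set of mutually
irrefutable dwAXp's. -/
def IsIrrefutableEnvelope (T : CTheory) (κ : Set (ℕ × ℕ) → ℕ)
    (D : Set (Set (ℕ × ℕ))) (X : Set (Set (ℕ × ℕ))) : Prop :=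
  IrrCandidate T κ D X ∧ ∀ X', IrrCandidate T κ D X' → ¬ X ⊂ X'

/-- A coherent explainer: on every question, it returns the members of a fixed
envelope (the union of its outputs over the dataset) included in the instance. -/
def IsCoherentExplainer (L : Explainer) : Prop :=
  ∀ T κ D x, IsQuestion T κ D x →
    L T κ D x = {E | (∃ z ∈ D, E ∈ L T κ D z) ∧ E ⊆ x} ∧
    IsEnvelope T κ D {E | ∃ z ∈ D, E ∈ L T κ D z}

/-!
Weak abductive explanations form a graph in which two explanations are adjacent when they are
compatible, i.e. form a coherent pair. Coherent sets of explanations are the cliques of this graph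
and `Irr(D, κ)` is its set of universal vertices. Any clique can be enlarged by universal vertices,
and every vertex lies in a maximal clique by Zorn's lemma, so the universal vertices are exactly the
vertices common to all maximal cliques. An instance is a maximal consistent set of literals, so the
explanations consistent with `x ∈ D` are subsets of `x`; hence the instances in `D` are universal
vertices. Adding them turns any clique into an envelope, so the maximal envelopes are precisely the
maximal cliques.
-/

section Cliques

variable {α : Type*} {r : α → α → Prop} {W Y : Set α}

/-- `Y` is a clique of the graph with vertex set `W` and adjacency relation `r`; as usual for
graphs, `r` is only required between distinct elements. -/
structure IsCliqueIn (r : α → α → Prop) (W Y : Set α) : Prop where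
  subset : Y ⊆ W
  pairwise : Y.Pairwise r

/-- The universal vertices of the graph with vertex set `W` and adjacency relation `r`: those
adjacent to every other vertex. -/
def universalVertices (r : α → α → Prop) (W : Set α) : Set α :=
  {a ∈ W | ∀ b ∈ W, a ≠ b → r a b}

theorem isCliqueIn_universalVertices : IsCliqueIn r W (universalVertices r W) :=
  ⟨fun _ ha => ha.1, fun _ ha b hb hab => ha.2 b hb.1 hab⟩

theorem isCliqueIn_singleton {a : α} (ha : a ∈ W) : IsCliqueIn r W {a} :=
  ⟨Set.singleton_subset_iff.2 ha, Set.pairwise_singleton a r⟩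

theorem IsCliqueIn.union_universalVertices [Std.Symm r] (hY : IsCliqueIn r W Y) :
    IsCliqueIn r W (Y ∪ universalVertices r W) where
  subset := Set.union_subset hY.subset isCliqueIn_universalVertices.subset
  pairwise := Set.pairwise_union_of_symm.2 ⟨hY.pairwise, isCliqueIn_universalVertices.pairwise,
    fun _ ha _ hb hab => symm (hb.2 _ (hY.subset ha) hab.symm)⟩

theorem IsCliqueIn.exists_maximal_superset (hY : IsCliqueIn r W Y) :
    ∃ M, Y ⊆ M ∧ Maximal (IsCliqueIn r W) M := by
  refine zorn_subset_nonempty {Z | IsCliqueIn r W Z} (fun c hc hchain _ => ?_) Y hY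
  refine ⟨⋃₀ c, ⟨?_, ?_⟩, fun _ => Set.subset_sUnion_of_mem⟩
  · exact Set.sUnion_subset fun Z hZ => (hc hZ).subset
  · exact (Set.pairwise_sUnion hchain.directedOn).2 fun Z hZ => (hc hZ).pairwise

theorem sInter_maximal_isCliqueIn [Std.Symm r] :
    ⋂₀ {M | Maximal (IsCliqueIn r W) M} = universalVertices r W := by
  apply Set.Subset.antisymm
  · intro a ha
    constructor
    · obtain ⟨M, -, hM⟩ := (isCliqueIn_universalVertices (r := r) (W := W)).exists_maximal_superset
      exact hM.prop.subset (ha M hM)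
    · intro b hb hab
      obtain ⟨M, hbM, hM⟩ := (isCliqueIn_singleton (r := r) hb).exists_maximal_superset
      exact hM.prop.pairwise (ha M hM) (hbM rfl) hab
  · refine Set.subset_sInter fun M hM => ?_
    exact Set.subset_union_right.trans (hM.le_of_ge hM.prop.union_universalVertices
      Set.subset_union_left)

end Cliques

section Assignments

variable {T : CTheory} {x y E : Set (ℕ × ℕ)}

theorem IsPartialAssignment.mono (hy : IsPartialAssignment T y) (hxy : x ⊆ y) :
    IsPartialAssignment T x :=
  ⟨fun l hl => hy.1 l (hxy hl), fun l hl l' hl' => hy.2 l (hxy hl) l' (hxy hl')⟩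

theorem IsInstance.subset_of_consistentLits_union (hx : IsInstance T x)
    (hE : ∀ l ∈ E, IsLiteral T l) (hxE : ConsistentLits (x ∪ E)) : E ⊆ x := by
  rintro ⟨f, v⟩ hfv
  obtain ⟨w, hfw⟩ := hx.2 f (hE _ hfv).1
  have hwv : w = v := hxE (f, w) (Or.inl hfw) (f, v) (Or.inr hfv) rfl
  rwa [← hwv]

theorem IsInstance.eq_of_subset (hx : IsInstance T x) (hy : IsPartialAssignment T y)
    (hxy : x ⊆ y) : x = y := by
  refine hxy.antisymm (hx.subset_of_consistentLits_union hy.1 ?_)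
  rw [Set.union_eq_self_of_subset_left hxy]
  exact hy.2

end Assignments

section Compatibility

variable {κ : Set (ℕ × ℕ) → ℕ} {D : Set (Set (ℕ × ℕ))}

/-- Two sets of literals are compatible under `(D, κ)` when, if jointly consistent, they do not
occur in instances of `D` with distinct classes. This is the adjacency relation of the graph whose
cliques are the coherent sets of explanations. -/
def Compatible (κ : Set (ℕ × ℕ) → ℕ) (D : Set (Set (ℕ × ℕ))) (E E' : Set (ℕ × ℕ)) : Prop :=
  ConsistentLits (E ∪ E') → ∀ y ∈ D, ∀ z ∈ D, E ⊆ y → E' ⊆ z → κ y = κ z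

instance : Std.Symm (Compatible κ D) where
  symm E E' h hcons y hy z hz hEy hEz :=
    (h (Set.union_comm E' E ▸ hcons) z hz y hy hEz hEy).symm

theorem coherentSet_iff_forall_compatible {Y : Set (Set (ℕ × ℕ))} :
    CoherentSet κ D Y ↔ ∀ E ∈ Y, ∀ E' ∈ Y, Compatible κ D E E' := by
  unfold CoherentSet Compatible
  push Not
  rfl

end Compatibility

section Explanations

variable {T : CTheory} {κ : Set (ℕ × ℕ) → ℕ} {D X Y : Set (Set (ℕ × ℕ))} {x y z E E' : Set (ℕ × ℕ)}

theorem isPartialAssignment_of_mem_dwUnion (hD : D ⊆ FeatureSpace T) (hE : E ∈ dwUnion T κ D) :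
    IsPartialAssignment T E := by
  obtain ⟨x, hx, hEx, -⟩ := hE
  exact (hD hx).1.mono hEx

theorem class_eq_of_mem_dwUnion (hE : E ∈ dwUnion T κ D) (hy : y ∈ D) (hz : z ∈ D)
    (hEy : E ⊆ y) (hEz : E ⊆ z) : κ y = κ z := by
  obtain ⟨x, -, -, hclass⟩ := hE
  exact (hclass y hy hEy).trans (hclass z hz hEz).symm

theorem coherentSet_iff_pairwise_compatible (hY : Y ⊆ dwUnion T κ D) :
    CoherentSet κ D Y ↔ Y.Pairwise (Compatible κ D) := by
  rw [coherentSet_iff_forall_compatible]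
  refine ⟨fun h E hE E' hE' _ => h E hE E' hE', fun h E hE E' hE' => ?_⟩
  rcases eq_or_ne E E' with rfl | hne
  · exact fun _ y hy z hz => class_eq_of_mem_dwUnion (hY hE) hy hz
  · exact h hE hE' hne

theorem coherentSet_pair_iff (hE : E ∈ dwUnion T κ D) (hE' : E' ∈ dwUnion T κ D) :
    CoherentSet κ D {E, E'} ↔ (E ≠ E' → Compatible κ D E E') := by
  rw [coherentSet_iff_pairwise_compatible (Set.pair_subset hE hE'), Set.pairwise_pair_of_symm]

theorem subset_dwUnion (hD : D ⊆ FeatureSpace T) : D ⊆ dwUnion T κ D := fun x hx =>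
  ⟨x, hx, subset_rfl, fun _ hy hxy => congrArg κ ((hD hx).eq_of_subset (hD hy).1 hxy).symm⟩

theorem compatible_of_mem (hD : D ⊆ FeatureSpace T) (hx : x ∈ D) (hE : E ∈ dwUnion T κ D) :
    Compatible κ D x E := by
  intro hcons y hy z hz hxy hEz
  have hEx : E ⊆ x := (hD hx).subset_of_consistentLits_union
    (isPartialAssignment_of_mem_dwUnion hD hE).1 hcons
  exact class_eq_of_mem_dwUnion hE hy hz (hEx.trans hxy) hEz

theorem subset_universalVertices (hD : D ⊆ FeatureSpace T) :
    D ⊆ universalVertices (Compatible κ D) (dwUnion T κ D) := fun _ hx =>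
  ⟨subset_dwUnion hD hx, fun _ hE _ => compatible_of_mem hD hx hE⟩

theorem irrCandidate_iff_subset :
    IrrCandidate T κ D X ↔ X ⊆ universalVertices (Compatible κ D) (dwUnion T κ D) := by
  rw [universalVertices, Set.subset_ofPred, forall₂_and]
  refine and_congr_right fun hX => forall₂_congr fun E hE => ?_
  push Not
  exact forall₂_congr fun E' hE' => coherentSet_pair_iff (hX hE) hE'

theorem IsIrrefutableEnvelope.eq_universalVertices (hX : IsIrrefutableEnvelope T κ D X) :
    X = universalVertices (Compatible κ D) (dwUnion T κ D) := by
  by_contra hne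
  exact hX.2 _ (irrCandidate_iff_subset.2 subset_rfl)
    ((irrCandidate_iff_subset.1 hX.1).ssubset_of_ne hne)

theorem IsEnvelope.isCliqueIn (hY : IsEnvelope T κ D Y) :
    IsCliqueIn (Compatible κ D) (dwUnion T κ D) Y :=
  ⟨hY.2.2.1, (coherentSet_iff_pairwise_compatible hY.2.2.1).1 hY.2.1⟩

theorem IsCliqueIn.isEnvelope (hY : IsCliqueIn (Compatible κ D) (dwUnion T κ D) Y)
    (hD : D ⊆ FeatureSpace T) (hDY : D ⊆ Y) : IsEnvelope T κ D Y :=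
  ⟨fun _ hE => isPartialAssignment_of_mem_dwUnion hD (hY.subset hE),
    (coherentSet_iff_pairwise_compatible hY.subset).2 hY.pairwise, hY.subset,
    fun x hx => ⟨x, hDY hx, subset_rfl⟩⟩

theorem maximal_isEnvelope_iff_maximal_isCliqueIn (hD : D ⊆ FeatureSpace T) :
    Maximal (IsEnvelope T κ D) Y ↔
      Maximal (IsCliqueIn (Compatible κ D) (dwUnion T κ D)) Y := by
  refine (maximal_iff_maximal_of_imp_of_forall (fun _ => IsEnvelope.isCliqueIn) fun Z hZ => ?_).symm
  exact ⟨_, Set.subset_union_left, hZ.union_universalVertices.isEnvelope hD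
    ((subset_universalVertices hD).trans Set.subset_union_right)⟩

theorem sInter_maximal_isEnvelope (hD : D ⊆ FeatureSpace T) :
    ⋂₀ {Y | Maximal (IsEnvelope T κ D) Y} =
      universalVertices (Compatible κ D) (dwUnion T κ D) := by
  simp_rw [maximal_isEnvelope_iff_maximal_isCliqueIn hD]
  exact sInter_maximal_isCliqueIn

end Explanations

theorem irrefutable_envelope_properties (T : CTheory) (κ : Set (ℕ × ℕ) → ℕ)
    (D : Set (Set (ℕ × ℕ))) (hκ : IsClassifier T κ) (hD : D ⊆ FeatureSpace T)
    (X : Set (Set (ℕ × ℕ))) (hX : IsIrrefutableEnvelope T κ D X) :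
    D ⊆ X ∧ IsEnvelope T κ D X ∧
    X = ⋂₀ {Y | IsEnvelope T κ D Y ∧ ∀ Z, IsEnvelope T κ D Z → ¬ Y ⊂ Z} := by
  have hmaximal : ∀ Y, (IsEnvelope T κ D Y ∧ ∀ Z, IsEnvelope T κ D Z → ¬ Y ⊂ Z) ↔
      Maximal (IsEnvelope T κ D) Y := fun Y => by
    rw [Set.maximal_iff_forall_ssuperset]
    exact and_congr_right fun _ => forall_congr' fun _ => imp_not_comm
  obtain rfl := hX.eq_universalVertices
  have hDX := subset_universalVertices (κ := κ) hD
  refine ⟨hDX, isCliqueIn_universalVertices.isEnvelope hD hDX, ?_⟩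
  simp_rw [hmaximal, sInter_maximal_isEnvelope hD]
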